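/- arXiv:1608.08545 — 5 statements merged into one kernel-verified Lean document; each statement's English description precedes it below -/
import Mathlib

section
/- Let Γ be a CSTN and σ a dynamic execution strategy for Γ. Let s be a scenario, p ∈ 𝒫, v ∈ {0,1}, and s′ = s[v/p]. Then for every time t ≤ [σ(s)]_{𝒪(p)} the following hold: (a) Hist(t, s, σ) = Hist(t, s′, σ); (b) for every X ∈ 𝒯, (X ∈ 𝒯_s and [σ(s)]_X ≤ t) iff (X ∈ 𝒯_{s′} and [σ(s′)]_X ≤ t); (c) for every X ∈ 𝒯, (X ∈ 𝒯_s and [σ(s)]_X = t) iff (X ∈ 𝒯_{s′} and [σ(s′)]_X = t). In particular, [σ(s)]_{𝒪(p)} = [σ(s′)]_{𝒪(p)}. -/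
/-!
If two scenarios have equal histories at time `t`, a dynamic strategy executes the same tasks at
time `t` in both (`CSTN.Dynamic.executed_at_iff`). So the first time at which the histories of `s`
and `s[v/p]` can diverge lies just after an observation made at the same time in both scenarios,
with different outcomes; the only such observation is that of `p`. This is the induction in
`CSTN.Dynamic.hist_eq_of_agree`, over the finitely many observation times of the two scenarios.
The other claims apply the first fact at every time up to `t`.
-/

open Classical

/-- A label over propositional variables `P`: a conjunction of positive or negative
literals over distinct variables, encoded as a partial assignment (`none` means the
variable does not occur in the label). The empty label is `fun _ => none`. -/
abbrev CLabel (P : Type) := P → Option Bool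

/-- The empty label `λ`. -/
def emptyLabel (P : Type) : CLabel P := fun _ => none

/-- A scenario `s` satisfies a label `ℓ` (written `s ⊨ ℓ`). -/
def sats {P : Type} (s : P → Bool) (ℓ : CLabel P) : Prop :=
  ∀ p b, ℓ p = some b → s p = b

/-- A Conditional Simple Temporal Network over tasks `T` and propositional
variables `P`.  A labeled constraint `(X, Y, δ, ℓ)` represents `(Y - X ≤ δ, ℓ)`. -/
structure CSTN (T P : Type) where
  /-- The labeled constraints. -/
  C : Set (T × T × ℝ × CLabel P)
  Cfin : C.Finite
  /-- The label of each task. -/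
  L : T → CLabel P
  /-- The observation tasks. -/
  OT : Set T
  /-- The observation task of each propositional variable. -/
  obs : P → T
  obs_mem : ∀ p, obs p ∈ OT
  obs_inj : Function.Injective obs
  obs_surj : ∀ X ∈ OT, ∃ p, obs p = X
  /-- Restriction WD1. -/
  wd1 : ∀ c ∈ C, ∀ s : P → Bool, sats s c.2.2.2 → sats s (L c.1) ∧ sats s (L c.2.1)

namespace CSTN

variable {T P : Type} (Γ : CSTN T P)

/-- The tasks `𝒯_s` executed in scenario `s` (the tasks of the projection `Γ_s`).
An execution strategy is encoded as a total function `σ : (P → Bool) → T → ℝ`;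
the values `σ s X` for `X ∉ 𝒯_s` are irrelevant. -/
def Tasks (s : P → Bool) : Set T := {X | sats s (Γ.L X)}

/-- The history `Hist(t, s, σ)`: the partial scenario recording the values in `s` of
the propositional variables observed strictly before time `t`. -/
noncomputable def Hist (σ : (P → Bool) → T → ℝ) (t : ℝ) (s : P → Bool) : P → Option Bool :=
  fun p => if Γ.obs p ∈ Γ.Tasks s ∧ σ s (Γ.obs p) < t then some (s p) else none

/-- The execution strategy `σ` is dynamic. -/
def Dynamic (σ : (P → Bool) → T → ℝ) : Prop :=
  ∀ s s' : P → Bool, ∀ X ∈ Γ.Tasks s,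
    Γ.Hist σ (σ s X) s = Γ.Hist σ (σ s X) s' → X ∈ Γ.Tasks s' ∧ σ s' X = σ s X

/-- The execution strategy `σ` is viable: in every scenario `s`, the schedule `σ s`
satisfies all constraints of the projection `Γ_s`. -/
def Viable (σ : (P → Bool) → T → ℝ) : Prop :=
  ∀ s : P → Bool, ∀ c ∈ Γ.C, sats s c.2.2.2 → σ s c.2.1 - σ s c.1 ≤ c.2.2.1

/-- `Γ` is dynamically controllable: it admits a dynamic and viable execution strategy. -/
def DynamicallyControllable : Prop :=
  ∃ σ : (P → Bool) → T → ℝ, Γ.Dynamic σ ∧ Γ.Viable σ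

end CSTN

namespace CSTN

theorem Dynamic.executed_at_iff {T P : Type} {Γ : CSTN T P} {σ : (P → Bool) → T → ℝ}
    (hdyn : Γ.Dynamic σ) {s s' : P → Bool} {t : ℝ} (h : Γ.Hist σ t s = Γ.Hist σ t s') (X : T) :
    X ∈ Γ.Tasks s ∧ σ s X = t ↔ X ∈ Γ.Tasks s' ∧ σ s' X = t := by
  constructor
  · rintro ⟨hX, rfl⟩
    exact hdyn s s' X hX h
  · rintro ⟨hX, rfl⟩
    exact hdyn s' s X hX h.symm

/-- Scenarios that agree except possibly at `p` have equal histories up to and including the time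
at which `p` is observed in the first of them; nothing is assumed about the second. -/
theorem Dynamic.hist_eq_of_agree {T P : Type} [Finite P] {Γ : CSTN T P}
    {σ : (P → Bool) → T → ℝ} (hdyn : Γ.Dynamic σ) {s s' : P → Bool} {p : P}
    (hs : ∀ q, q ≠ p → s' q = s q) (t : ℝ) (ht : t ≤ σ s (Γ.obs p)) :
    Γ.Hist σ t s = Γ.Hist σ t s' := by
  let V : Set ℝ := Set.range (fun q => σ s (Γ.obs q)) ∪ Set.range (fun q => σ s' (Γ.obs q))
  have hV : V.Finite := (Set.finite_range _).union (Set.finite_range _)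
  induction hn : (V ∩ Set.Iio t).ncard using Nat.strong_induction_on generalizing t with
  | _ n ih =>
    have key : ∀ u ∈ V, u < t → Γ.Hist σ u s = Γ.Hist σ u s' := by
      intro u hu hut
      refine ih _ ?_ u (hut.le.trans ht) rfl
      rw [← hn]
      refine Set.ncard_lt_ncard ?_ (hV.inter_of_left _)
      have hsub : V ∩ Set.Iio u ⊆ V ∩ Set.Iio t := fun x hx => ⟨hx.1, lt_trans hx.2 hut⟩
      refine (Set.ssubset_iff_of_subset hsub).2 ?_
      exact ⟨u, ⟨hu, hut⟩, fun h => lt_irrefl u h.2⟩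
    funext q
    have hiff : (Γ.obs q ∈ Γ.Tasks s ∧ σ s (Γ.obs q) < t) ↔
        (Γ.obs q ∈ Γ.Tasks s' ∧ σ s' (Γ.obs q) < t) := by
      constructor
      · rintro ⟨hq, hlt⟩
        obtain ⟨h1, h2⟩ :=
          (hdyn.executed_at_iff (key _ (Or.inl ⟨q, rfl⟩) hlt) (Γ.obs q)).1 ⟨hq, rfl⟩
        exact ⟨h1, h2.trans_lt hlt⟩
      · rintro ⟨hq, hlt⟩
        obtain ⟨h1, h2⟩ :=
          (hdyn.executed_at_iff (key _ (Or.inr ⟨q, rfl⟩) hlt) (Γ.obs q)).2 ⟨hq, rfl⟩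
        exact ⟨h1, h2.trans_lt hlt⟩
    unfold Hist
    by_cases hq : Γ.obs q ∈ Γ.Tasks s ∧ σ s (Γ.obs q) < t
    · rw [if_pos hq, if_pos (hiff.1 hq), hs q]
      rintro rfl
      exact absurd hq.2 ht.not_gt
    · rw [if_neg hq, if_neg (mt hiff.2 hq)]

end CSTN

/-- **Lemma 1.** Let `σ` be a dynamic execution strategy, `s` a scenario, `p ∈ 𝒫`,
`v ∈ {0,1}` and `s' = s[v/p]`. For every `t ≤ [σ(s)]_{𝒪(p)}`:
(a) `Hist(t, s, σ) = Hist(t, s', σ)`;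
(b) `[σ(s)]_X ≤ t ↔ [σ(s')]_X ≤ t` for every `X ∈ 𝒯`;
(c) `[σ(s)]_X = t ↔ [σ(s')]_X = t` for every `X ∈ 𝒯`;
and in particular `[σ(s)]_{𝒪(p)} = [σ(s')]_{𝒪(p)}`. -/
theorem dynamic_history_lemma {T P : Type} [Finite T] [Finite P] [DecidableEq P]
    (Γ : CSTN T P) (σ : (P → Bool) → T → ℝ) (hdyn : Γ.Dynamic σ)
    (s : P → Bool) (p : P) (v : Bool) (hp : Γ.obs p ∈ Γ.Tasks s) :
    (∀ t : ℝ, t ≤ σ s (Γ.obs p) →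
      Γ.Hist σ t s = Γ.Hist σ t (Function.update s p v) ∧
      (∀ X : T, X ∈ Γ.Tasks s ∧ σ s X ≤ t ↔
        X ∈ Γ.Tasks (Function.update s p v) ∧ σ (Function.update s p v) X ≤ t) ∧
      (∀ X : T, X ∈ Γ.Tasks s ∧ σ s X = t ↔
        X ∈ Γ.Tasks (Function.update s p v) ∧ σ (Function.update s p v) X = t)) ∧
    Γ.obs p ∈ Γ.Tasks (Function.update s p v) ∧
    σ (Function.update s p v) (Γ.obs p) = σ s (Γ.obs p) := by
  have hist := hdyn.hist_eq_of_agree (s := s) (s' := Function.update s p v) (p := p)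
    fun q hq => Function.update_of_ne hq v s
  have at_iff := fun t ht => hdyn.executed_at_iff (hist t ht)
  refine ⟨fun t ht => ⟨hist t ht, fun X => ⟨?_, ?_⟩, at_iff t ht⟩,
    (at_iff _ le_rfl _).1 ⟨hp, rfl⟩⟩
  · rintro ⟨hX, hle⟩
    obtain ⟨h1, h2⟩ := (at_iff _ (hle.trans ht) X).1 ⟨hX, rfl⟩
    exact ⟨h1, h2.trans_le hle⟩
  · rintro ⟨hX, hle⟩
    obtain ⟨h1, h2⟩ := (at_iff _ (hle.trans ht) X).2 ⟨hX, rfl⟩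
    exact ⟨h1, h2.trans_le hle⟩
end

section
/- Let σ be a dynamic execution strategy for a CSTN Γ, and let σ′ be an execution strategy for Γ such that for all scenarios s, s′ and all tasks X ∈ 𝒯_s, Y ∈ 𝒯_{s′}, one has [σ′(s)]_X < [σ′(s′)]_Y if and only if [σ(s)]_X < [σ(s′)]_Y. Then σ′ is dynamic. -/
/-! A history only depends on which observations precede the execution of a task, so
order-equivalent strategies have equal histories at corresponding execution times
(`CSTN.hist_eq_of_order_equiv`). Dynamicity of `σ` then makes the `σ`-times of `X` in the two
scenarios equal, and equality of times transfers to `σ'` because the order on times is total. -/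

open Classical

/-- Under the order hypothesis, the history in any scenario `r`, taken at the time at which
a task `X` is executed in a scenario `s`, is the same for both strategies: whether an observation
in `r` precedes the execution of `X` in `s` is a comparison of the kind `horder` preserves. -/
theorem CSTN.hist_eq_of_order_equiv {T P : Type} (Γ : CSTN T P) (σ σ' : (P → Bool) → T → ℝ)
    (horder : ∀ s s' : P → Bool, ∀ X ∈ Γ.Tasks s, ∀ Y ∈ Γ.Tasks s',
      (σ' s X < σ' s' Y ↔ σ s X < σ s' Y))
    {s : P → Bool} {X : T} (hX : X ∈ Γ.Tasks s) (r : P → Bool) :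
    Γ.Hist σ' (σ' s X) r = Γ.Hist σ (σ s X) r := by
  funext p
  have h : (Γ.obs p ∈ Γ.Tasks r ∧ σ' r (Γ.obs p) < σ' s X) ↔
      (Γ.obs p ∈ Γ.Tasks r ∧ σ r (Γ.obs p) < σ s X) :=
    and_congr_right fun hp => horder r s _ hp X hX
  simp only [CSTN.Hist, h]

/-- If `σ` is dynamic and `σ'` induces the same strict order on execution times
(over pairs of scenarios and executed tasks), then `σ'` is dynamic. -/
theorem dynamic_of_order_equiv {T P : Type} [Finite T] [Finite P]
    (Γ : CSTN T P) (σ σ' : (P → Bool) → T → ℝ) (hdyn : Γ.Dynamic σ)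
    (horder : ∀ s s' : P → Bool, ∀ X ∈ Γ.Tasks s, ∀ Y ∈ Γ.Tasks s',
      (σ' s X < σ' s' Y ↔ σ s X < σ s' Y)) :
    Γ.Dynamic σ' := by
  intro s s' X hX hH
  rw [Γ.hist_eq_of_order_equiv σ σ' horder hX, Γ.hist_eq_of_order_equiv σ σ' horder hX] at hH
  obtain ⟨hX', heq⟩ := hdyn s s' X hX hH
  -- Equal times under `σ` rule out both strict comparisons under `σ'`.
  exact ⟨hX', le_antisymm
    (not_lt.1 fun h => ((horder s s' X hX X hX').1 h).ne' heq)
    (not_lt.1 fun h => ((horder s' s X hX' X hX).1 h).ne heq)⟩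
end

section
/- If σ is a dynamic relative execution strategy from a non-terminal configuration c = (t, ψ, h) of a CSTN Γ, then σ has a well-defined next action. -/
/-!
Let `tn` be the earliest time at which any scenario compatible with `c.h` executes a task not
scheduled by `ψ`, the minimum being taken over all compatible scenarios simultaneously; it exists
because there are finitely many scenarios and tasks and because `c` is not terminal. Before `tn`
every compatible scenario has executed exactly the tasks in the domain of `ψ`, so its history at
`tn` is `c.h` (`hist_eq_h`). All compatible scenarios thus share their history at `tn`, and
dynamicity forces them to execute the same tasks at `tn`; the set of these tasks, together with
`tn`, is the next action.
-/

open Classical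

/-! ### Configurations and relative execution strategies -/

/-- A configuration `c = (t, ψ, h)`: a time point `t ∈ ℝ ∪ {-∞}`, a partial
schedule `ψ` (encoded as `T → Option ℝ`) and a partial scenario `h`
(encoded as `P → Option Bool`). -/
structure CConfig (T P : Type) where
  t : WithBot ℝ
  ψ : T → Option ℝ
  h : P → Option Bool

/-- Well-formedness of a configuration: `ψ` is a partial schedule up to time `t`
and the domain of `h` is `{p ∈ 𝒫 ∣ 𝒪(p) ∈ Dom(ψ)}`. -/
def CConfig.WF {T P : Type} (Γ : CSTN T P) (c : CConfig T P) : Prop :=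
  (∀ X r, c.ψ X = some r → (r : WithBot ℝ) ≤ c.t) ∧
  (∀ p, (c.h p).isSome ↔ (c.ψ (Γ.obs p)).isSome)

/-- `s ∈ Σ_𝒫[h]`: the scenario `s` is a completion of the partial scenario `h`. -/
def Compatible {P : Type} (h : P → Option Bool) (s : P → Bool) : Prop :=
  ∀ p b, h p = some b → s p = b

/-- The schedule `sch` over `𝒯_s` is a completion of the partial schedule of the
configuration `c`: its domain `𝒯_s` contains `Dom(ψ)`, it agrees with `ψ` on
`Dom(ψ)`, and it executes all other tasks of `𝒯_s` strictly after time `c.t`. -/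
def IsCompletion {T P : Type} (Γ : CSTN T P) (c : CConfig T P) (s : P → Bool)
    (sch : T → ℝ) : Prop :=
  (∀ X, (c.ψ X).isSome → X ∈ Γ.Tasks s) ∧
  (∀ X r, c.ψ X = some r → sch X = r) ∧
  (∀ X ∈ Γ.Tasks s, c.ψ X = none → c.t < (sch X : WithBot ℝ))

/-- A relative execution strategy from the configuration `c` (encoded as a total
function): it maps every scenario `s ∈ Σ_𝒫[h]` to a schedule over `𝒯_s` which is a
completion of `ψ`. -/
def IsRelStrategy {T P : Type} (Γ : CSTN T P) (c : CConfig T P)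
    (σ : (P → Bool) → T → ℝ) : Prop :=
  ∀ s : P → Bool, Compatible c.h s → IsCompletion Γ c s (σ s)

/-- The relative execution strategy `σ` from the configuration `c` is dynamic. -/
def RelDynamic {T P : Type} (Γ : CSTN T P) (c : CConfig T P)
    (σ : (P → Bool) → T → ℝ) : Prop :=
  ∀ s s' : P → Bool, Compatible c.h s → Compatible c.h s' → ∀ X ∈ Γ.Tasks s,
    Γ.Hist σ (σ s X) s = Γ.Hist σ (σ s X) s' → X ∈ Γ.Tasks s' ∧ σ s' X = σ s X

/-- The relative execution strategy `σ` from the configuration `c` is viable: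
for every scenario `s ∈ Σ_𝒫[h]`, the schedule `σ s` is feasible for `Γ_s`. -/
def RelViable {T P : Type} (Γ : CSTN T P) (c : CConfig T P)
    (σ : (P → Bool) → T → ℝ) : Prop :=
  ∀ s : P → Bool, Compatible c.h s →
    ∀ con ∈ Γ.C, sats s con.2.2.2 → σ s con.2.1 - σ s con.1 ≤ con.2.2.1

/-- The configuration `c` is terminal: `𝒯_s = Dom(ψ)` for every `s ∈ Σ_𝒫[h]`. -/
def Terminal {T P : Type} (Γ : CSTN T P) (c : CConfig T P) : Prop :=
  ∀ s : P → Bool, Compatible c.h s → Γ.Tasks s = {X | (c.ψ X).isSome}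

/-- `(t_next, 𝒯_next)` is a next action for the configuration `c`: `t_next > t` and
`𝒯_next` is a non-empty set of tasks not scheduled by `ψ`. -/
def NextAction {T P : Type} (c : CConfig T P) (tn : ℝ) (Tn : Set T) : Prop :=
  c.t < (tn : WithBot ℝ) ∧ Tn.Nonempty ∧ ∀ X ∈ Tn, c.ψ X = none

/-- The strategy `σ` from the configuration `c` has the well-defined next action
`(tn, Tn)`: for every scenario `s ∈ Σ_𝒫[h]`,
`min_{X ∈ 𝒯_s ∖ Dom(ψ)} [σ(s)]_X = tn` and `{X ∈ 𝒯_s ∣ [σ(s)]_X = tn} = Tn`. -/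
def WDNA {T P : Type} (Γ : CSTN T P) (c : CConfig T P) (σ : (P → Bool) → T → ℝ)
    (tn : ℝ) (Tn : Set T) : Prop :=
  NextAction c tn Tn ∧
  ∀ s : P → Bool, Compatible c.h s →
    IsLeast ((σ s) '' {X | X ∈ Γ.Tasks s ∧ c.ψ X = none}) tn ∧
    {X | X ∈ Γ.Tasks s ∧ σ s X = tn} = Tn

/-- The strategy `σ` has a well-defined next action. -/
def HasWDNA {T P : Type} (Γ : CSTN T P) (c : CConfig T P)
    (σ : (P → Bool) → T → ℝ) : Prop :=
  ∃ tn Tn, WDNA Γ c σ tn Tn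

/-- `o` is an observation of `𝒫_next = {p ∈ 𝒫 ∣ 𝒪(p) ∈ 𝒯_next}`: a partial
assignment with domain exactly `𝒫_next`. -/
def IsObs {T P : Type} (Γ : CSTN T P) (Tn : Set T) (o : P → Option Bool) : Prop :=
  ∀ p, (o p).isSome ↔ Γ.obs p ∈ Tn

/-- The next configuration `c[t_next/𝒯_next, o] = (t_next, ψ[t_next/𝒯_next], h ∪ o)`. -/
noncomputable def nextConfig {T P : Type} (Γ : CSTN T P) (c : CConfig T P)
    (tn : ℝ) (Tn : Set T) (o : P → Option Bool) : CConfig T P where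
  t := (tn : WithBot ℝ)
  ψ := fun X => if X ∈ Tn then some tn else c.ψ X
  h := fun p => if Γ.obs p ∈ Tn then o p else c.h p

/-- The observation of `𝒫_next` induced by the scenario `s`. -/
noncomputable def obsOf {T P : Type} (Γ : CSTN T P) (Tn : Set T) (s : P → Bool) :
    P → Option Bool :=
  fun p => if Γ.obs p ∈ Tn then some (s p) else none

/-- `Γ` is dynamically controllable from the configuration `c`: it admits a dynamic
and viable relative execution strategy from `c`. -/
def DCFrom {T P : Type} (Γ : CSTN T P) (c : CConfig T P) : Prop :=
  ∃ σ : (P → Bool) → T → ℝ, IsRelStrategy Γ c σ ∧ RelDynamic Γ c σ ∧ RelViable Γ c σ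

/-- A task scheduled by `ψ` is executed at its recorded time, which is at most `c.t`. -/
lemma time_le_of_scheduled {T P : Type} {Γ : CSTN T P} {c : CConfig T P} (hwf : c.WF Γ)
    {σ : (P → Bool) → T → ℝ} (hstrat : IsRelStrategy Γ c σ) {s : P → Bool}
    (hs : Compatible c.h s) {X : T} (hX : c.ψ X ≠ none) :
    X ∈ Γ.Tasks s ∧ (σ s X : WithBot ℝ) ≤ c.t := by
  obtain ⟨r, hr⟩ := Option.ne_none_iff_exists'.mp hX
  obtain ⟨h1, h2, -⟩ := hstrat s hs
  refine ⟨h1 X (by simp [hr]), ?_⟩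
  rw [h2 X r hr]
  exact hwf.1 X r hr

/-- If `tn` is later than `c.t` and `s` executes no unscheduled task before `tn`, then the
observations made by `s` before `tn` are exactly those already recorded in `c.h`. -/
lemma hist_eq_h {T P : Type} {Γ : CSTN T P} {c : CConfig T P} (hwf : c.WF Γ)
    {σ : (P → Bool) → T → ℝ} (hstrat : IsRelStrategy Γ c σ) {tn : ℝ}
    (htn : c.t < (tn : WithBot ℝ)) {s : P → Bool} (hs : Compatible c.h s)
    (hmin : ∀ X ∈ Γ.Tasks s, c.ψ X = none → tn ≤ σ s X) :
    Γ.Hist σ tn s = c.h := by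
  funext p
  unfold CSTN.Hist
  by_cases hp : c.ψ (Γ.obs p) = none
  · have hh : c.h p = none := by
      have := hwf.2 p
      simpa [hp] using this
    rw [if_neg (fun h => absurd h.2 (not_lt.mpr (hmin _ h.1 hp))), hh]
  · obtain ⟨hmem, hle⟩ := time_le_of_scheduled hwf hstrat hs hp
    obtain ⟨b, hb⟩ := Option.isSome_iff_exists.mp
      ((hwf.2 p).mpr (Option.isSome_iff_ne_none.mpr hp))
    rw [if_pos ⟨hmem, WithBot.coe_lt_coe.mp (hle.trans_lt htn)⟩, hb, hs p b hb]

/-- **Lemma 8.** A dynamic relative execution strategy from a non-terminal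
configuration has a well-defined next action. -/
theorem hasWDNA_of_relDynamic {T P : Type} [Finite T] [Finite P]
    (Γ : CSTN T P) (c : CConfig T P) (hwf : c.WF Γ) (hnt : ¬ Terminal Γ c)
    (σ : (P → Bool) → T → ℝ) (hstrat : IsRelStrategy Γ c σ)
    (hdyn : RelDynamic Γ c σ) :
    HasWDNA Γ c σ := by
  -- Compatible scenarios paired with a task they execute that `ψ` does not schedule.
  let S : Set ((P → Bool) × T) :=
    {q | Compatible c.h q.1 ∧ q.2 ∈ Γ.Tasks q.1 ∧ c.ψ q.2 = none}
  have hS : S.Nonempty := by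
    by_contra hne
    refine hnt fun s hs => Set.ext fun X => ⟨fun hX => ?_, (hstrat s hs).1 X⟩
    refine Option.isSome_iff_ne_none.mpr fun h0 => hne ⟨(s, X), hs, hX, h0⟩
  obtain ⟨⟨s₁, X₁⟩, ⟨hs₁, hX₁, hψ₁⟩, hmin⟩ :=
    Set.exists_min_image S (fun q => σ q.1 q.2) S.toFinite hS
  dsimp only at hs₁ hX₁ hψ₁ hmin
  obtain ⟨tn, htn⟩ : ∃ tn, tn = σ s₁ X₁ := ⟨_, rfl⟩
  rw [← htn] at hmin
  have hlt : c.t < (tn : WithBot ℝ) := htn ▸ (hstrat s₁ hs₁).2.2 X₁ hX₁ hψ₁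
  have hleast : ∀ s, Compatible c.h s → ∀ X ∈ Γ.Tasks s, c.ψ X = none → tn ≤ σ s X :=
    fun s hs X hX h0 => hmin (s, X) ⟨hs, hX, h0⟩
  have hsame : ∀ s s', Compatible c.h s → Compatible c.h s' → ∀ X, X ∈ Γ.Tasks s →
      σ s X = tn → X ∈ Γ.Tasks s' ∧ σ s' X = tn := by
    intro s s' hs hs' X hX hXt
    have := hdyn s s' hs hs' X hX
    rw [hXt, hist_eq_h hwf hstrat hlt hs (hleast s hs),
      hist_eq_h hwf hstrat hlt hs' (hleast s' hs')] at this
    exact this rfl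
  refine ⟨tn, {X | X ∈ Γ.Tasks s₁ ∧ σ s₁ X = tn}, ⟨hlt, ⟨X₁, hX₁, htn.symm⟩, ?_⟩, ?_⟩
  · rintro X ⟨-, hXt⟩
    by_contra h0
    have hle := (time_le_of_scheduled hwf hstrat hs₁ h0).2
    rw [hXt] at hle
    exact absurd hlt (not_lt.mpr hle)
  · intro s hs
    obtain ⟨hX, hXt⟩ := hsame s₁ s hs₁ hs X₁ hX₁ htn.symm
    refine ⟨⟨⟨X₁, ⟨hX, hψ₁⟩, hXt⟩, ?_⟩, Set.ext fun X => ⟨?_, ?_⟩⟩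
    · rintro _ ⟨X, ⟨hX, h0⟩, rfl⟩
      exact hleast s hs X hX h0
    · exact fun h => hsame s s₁ hs hs₁ X h.1 h.2
    · exact fun h => hsame s₁ s hs₁ hs X h.1 h.2
end

section
/- Let σ be a relative execution strategy from a non-terminal configuration c = (t, ψ, h) of a CSTN Γ. If σ has a well-defined next action and child(σ, o) is dynamic for every observation o : 𝒫_next(σ) → {0,1}, then σ is dynamic. -/
/-! The proof compares two scenarios `s`, `s'` compatible with `h` and a task `X` of `s`
at which they have the same history. Three cases arise.

* If `X` is already scheduled by `ψ`, then `s` and `s'` both execute it at the time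
  prescribed by `ψ`, since every schedule of the strategy is a completion of `ψ`.
* If `X` is unscheduled and executed at time `tn` in `s`, then `X ∈ Tn`, and every
  compatible scenario executes `Tn` at time `tn`.
* Otherwise `X` is executed strictly after `tn`. The history then contains the outcome of
  every observation made at `tn`, so `s` and `s'` induce the same observation of `𝒫_next`
  (`eq_of_hist_eq`). They are therefore both scenarios of the same child configuration
  (`compatible_nextConfig`), whose strategy is dynamic. -/

open Classical

theorem isObs_obsOf {T P : Type} (Γ : CSTN T P) (Tn : Set T) (s : P → Bool) :
    IsObs Γ Tn (obsOf Γ Tn s) := by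
  intro p
  by_cases hp : Γ.obs p ∈ Tn <;> simp [obsOf, hp]

/-- A scenario `s'` compatible with `c` that agrees with `s` on the propositions observed
by `Tn` belongs to the child configuration given by the observation of `s`. -/
theorem compatible_nextConfig {T P : Type} (Γ : CSTN T P) (c : CConfig T P)
    (tn : ℝ) (Tn : Set T) {s s' : P → Bool} (hs' : Compatible c.h s')
    (hagree : ∀ p, Γ.obs p ∈ Tn → s' p = s p) :
    Compatible (nextConfig Γ c tn Tn (obsOf Γ Tn s)).h s' := by
  intro p b hb
  by_cases hp : Γ.obs p ∈ Tn
  · simp only [nextConfig, obsOf, hp, if_true, Option.some.injEq] at hb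
    rw [hagree p hp, hb]
  · simp only [nextConfig, hp, if_false] at hb
    exact hs' p b hb

/-- Scenarios with equal histories at time `t` agree on every proposition that one of them
has observed before `t`. -/
theorem eq_of_hist_eq {T P : Type} (Γ : CSTN T P) (σ : (P → Bool) → T → ℝ) {t : ℝ}
    {s s' : P → Bool} (h : Γ.Hist σ t s = Γ.Hist σ t s') {p : P}
    (hp : Γ.obs p ∈ Γ.Tasks s) (hlt : σ s (Γ.obs p) < t) : s' p = s p := by
  have h1 := congrFun h p
  simp only [CSTN.Hist, hp, hlt, and_self, if_true] at h1
  split_ifs at h1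
  exact (Option.some.inj h1).symm

/-- **Lemma 10.** Let `σ` be a relative execution strategy from a non-terminal
configuration `c`. If `σ` has a well-defined next action `(tn, Tn)` and the child
strategy (the restriction of `σ`) is dynamic from the child configuration for
every observation `o` of `𝒫_next`, then `σ` is dynamic. -/
theorem relDynamic_of_children {T P : Type} [Finite T] [Finite P]
    (Γ : CSTN T P) (c : CConfig T P) (hwf : c.WF Γ) (hnt : ¬ Terminal Γ c)
    (σ : (P → Bool) → T → ℝ) (hstrat : IsRelStrategy Γ c σ)
    (tn : ℝ) (Tn : Set T) (hwdna : WDNA Γ c σ tn Tn)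
    (hchild : ∀ o : P → Option Bool, IsObs Γ Tn o →
      RelDynamic Γ (nextConfig Γ c tn Tn o) σ) :
    RelDynamic Γ c σ := by
  intro s s' hs hs' X hX hist
  obtain ⟨-, hnext⟩ := hwdna
  obtain ⟨⟨-, hmin⟩, hTn⟩ := hnext s hs
  cases hψ : c.ψ X with
  | some r =>
    have hdom : (c.ψ X).isSome := by simp [hψ]
    exact ⟨(hstrat s' hs').1 X hdom,
      ((hstrat s' hs').2.1 X r hψ).trans ((hstrat s hs).2.1 X r hψ).symm⟩
  | none =>
    have hle : tn ≤ σ s X := hmin ⟨X, ⟨hX, hψ⟩, rfl⟩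
    rcases hle.eq_or_lt with heq | hlt
    · have hXn : X ∈ Tn := hTn ▸ (⟨hX, heq.symm⟩ : X ∈ Γ.Tasks s ∧ σ s X = tn)
      rw [← (hnext s' hs').2] at hXn
      exact ⟨hXn.1, hXn.2.trans heq⟩
    · have hagree : ∀ p, Γ.obs p ∈ Tn → s' p = s p := by
        intro p hp
        rw [← hTn] at hp
        exact eq_of_hist_eq Γ σ hist hp.1 (hp.2.trans_lt hlt)
      exact hchild (obsOf Γ Tn s) (isObs_obsOf Γ Tn s) s s'
        (compatible_nextConfig Γ c tn Tn hs fun _ _ => rfl)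
        (compatible_nextConfig Γ c tn Tn hs' hagree) X hX hist
end

section
/- Let σ be a dynamic relative execution strategy from a configuration c = (t, ψ, h) of a CSTN Γ that has a well-defined next action (t_next(σ), 𝒯_next(σ)), and for each observation o : 𝒫_next(σ) → {0,1} let σ_o = child(σ, o). Then σ is the union of the strategies σ_o over all observations o, i.e., for every scenario s ∈ Σ_𝒫[h], letting o be the observation with o(p) = s(p) for all p ∈ 𝒫_next(σ), one has s ∈ Σ_𝒫[h ∪ o] and σ(s) = σ_o(s); conversely, given for each observation o : 𝒫_next(σ) → {0,1} a relative execution strategy σ_o from the child configuration next(σ, o), the function σ′ defined by σ′(s) = σ_o(s) whenever s ∈ Σ_𝒫[h ∪ o] is a relative execution strategy from c with well-defined next action (t_next(σ), 𝒯_next(σ)) and child(σ′, o) = σ_o for every o. -/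
/-!
Every scenario `s` compatible with `h` determines exactly one observation of `𝒫_next`, namely
`obsOf Γ Tn s`, and `s` is compatible with `h ∪ o` for an observation `o` only if `o` is this one
(`compatible_nextConfig_obsOf`, `obsOf_eq_of_compatible`). Hence the sets `Σ_𝒫[h ∪ o]` partition
`Σ_𝒫[h]`, which yields the union statement and makes the glued strategy well defined with the given
children.

A completion of `ψ[t_next/𝒯_next]` executes `𝒯_next` at `t_next > t` and every task outside
`Dom(ψ) ∪ 𝒯_next` after `t_next`. It is therefore a completion of `ψ`
(`IsCompletion.of_nextConfig`) whose earliest new tasks are those of `𝒯_next`, at time `t_next`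
(`IsCompletion.nextAction_of_nextConfig`). Applying this in each scenario gives the claims about
the glued strategy.
-/

open Classical

theorem compatible_nextConfig_obsOf {T P : Type} (Γ : CSTN T P) (c : CConfig T P) (tn : ℝ)
    (Tn : Set T) {s : P → Bool} (hs : Compatible c.h s) :
    Compatible (nextConfig Γ c tn Tn (obsOf Γ Tn s)).h s := by
  intro p b hb
  by_cases hp : Γ.obs p ∈ Tn
  · simpa [nextConfig, obsOf, hp] using hb
  · exact hs p b (by simpa [nextConfig, hp] using hb)

/-- The observation is recovered from any scenario compatible with `h ∪ o`, so distinct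
observations have disjoint sets of scenarios `Σ_𝒫[h ∪ o]`. -/
theorem obsOf_eq_of_compatible {T P : Type} {Γ : CSTN T P} {c : CConfig T P} {tn : ℝ}
    {Tn : Set T} {o : P → Option Bool} (ho : IsObs Γ Tn o) {s : P → Bool}
    (hs : Compatible (nextConfig Γ c tn Tn o).h s) : obsOf Γ Tn s = o := by
  funext p
  by_cases hp : Γ.obs p ∈ Tn
  · obtain ⟨b, hb⟩ := Option.isSome_iff_exists.mp ((ho p).mpr hp)
    have hsb : s p = b := hs p b (by simpa [nextConfig, hp] using hb)
    simp [obsOf, hp, hb, hsb]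
  · have hnone : o p = none := by
      rw [← Option.not_isSome_iff_eq_none, ho p]
      exact hp
    simp [obsOf, hp, hnone]

theorem IsCompletion.of_nextConfig {T P : Type} {Γ : CSTN T P} {c : CConfig T P} {tn : ℝ}
    {Tn : Set T} {o : P → Option Bool} {s : P → Bool} {sch : T → ℝ}
    (hna : NextAction c tn Tn) (h : IsCompletion Γ (nextConfig Γ c tn Tn o) s sch) :
    IsCompletion Γ c s sch := by
  obtain ⟨ht, -, hfresh⟩ := hna
  obtain ⟨hdom, hval, hlate⟩ := h
  refine ⟨fun X hX => hdom X ?_, fun X r hX => hval X r ?_, fun X hXs hX => ?_⟩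
  · by_cases hXn : X ∈ Tn <;> simp [nextConfig, hXn, hX]
  · have hXn : X ∉ Tn := fun hXn => by simp [hfresh X hXn] at hX
    simp [nextConfig, hXn, hX]
  · by_cases hXn : X ∈ Tn
    · rw [hval X tn (by simp [nextConfig, hXn])]
      exact ht
    · exact ht.trans (hlate X hXs (by simp [nextConfig, hXn, hX]))

/-- In a completion of `ψ[t_next/𝒯_next]`, the earliest time of a task outside `Dom(ψ)` is
`t_next`, and the tasks executed at that time are those of `𝒯_next`. Well-formedness of `c`
ensures that no task of `Dom(ψ)` is executed at `t_next`. -/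
theorem IsCompletion.nextAction_of_nextConfig {T P : Type} {Γ : CSTN T P} {c : CConfig T P}
    {tn : ℝ} {Tn : Set T} {o : P → Option Bool} {s : P → Bool} {sch : T → ℝ} (hwf : c.WF Γ)
    (hna : NextAction c tn Tn) (h : IsCompletion Γ (nextConfig Γ c tn Tn o) s sch) :
    IsLeast (sch '' {X | X ∈ Γ.Tasks s ∧ c.ψ X = none}) tn ∧
      {X | X ∈ Γ.Tasks s ∧ sch X = tn} = Tn := by
  obtain ⟨ht, hne, hfresh⟩ := hna
  obtain ⟨hdom, hval, hlate⟩ := h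
  have hmem : ∀ X ∈ Tn, X ∈ Γ.Tasks s := fun X hX => hdom X (by simp [nextConfig, hX])
  have hnow : ∀ X ∈ Tn, sch X = tn := fun X hX => hval X tn (by simp [nextConfig, hX])
  have hafter : ∀ X ∈ Γ.Tasks s, X ∉ Tn → c.ψ X = none → tn < sch X := fun X hXs hXn hX =>
    WithBot.coe_lt_coe.mp (hlate X hXs (by simp [nextConfig, hXn, hX]))
  refine ⟨⟨?_, ?_⟩, ?_⟩
  · obtain ⟨X, hX⟩ := hne
    exact ⟨X, ⟨hmem X hX, hfresh X hX⟩, hnow X hX⟩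
  · rintro _ ⟨X, ⟨hXs, hX⟩, rfl⟩
    by_cases hXn : X ∈ Tn
    · exact (hnow X hXn).ge
    · exact (hafter X hXs hXn hX).le
  · ext X
    refine ⟨fun ⟨hXs, hXt⟩ => ?_, fun hX => ⟨hmem X hX, hnow X hX⟩⟩
    by_contra hXn
    rcases hX : c.ψ X with _ | r
    · exact (hafter X hXs hXn hX).ne' hXt
    · have hr : sch X = r := hval X r (by simp [nextConfig, hXn, hX])
      have hle := hwf.1 X r hX
      rw [← hr, hXt] at hle
      exact absurd ht hle.not_gt

/-- A strategy `σ` with well-defined next action `(tn, Tn)` is the union of its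
child strategies `σ_o = child(σ, o)` (which, in this total-function encoding,
are restrictions of `σ` itself), and conversely a family of relative execution
strategies `σf o` from the child configurations `next(σ, o)` glues to a relative
execution strategy from `c` with well-defined next action `(tn, Tn)` whose
children are the `σf o`. -/
theorem strategy_union_of_children {T P : Type} [Finite T] [Finite P]
    (Γ : CSTN T P) (c : CConfig T P) (hwf : c.WF Γ)
    (σ : (P → Bool) → T → ℝ) (tn : ℝ) (Tn : Set T)
    (hstrat : IsRelStrategy Γ c σ) (hdyn : RelDynamic Γ c σ)
    (hwdna : WDNA Γ c σ tn Tn) :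
    (∀ s : P → Bool, Compatible c.h s →
      Compatible (nextConfig Γ c tn Tn (obsOf Γ Tn s)).h s ∧
      σ s = σ s) ∧
    ∀ σf : (P → Option Bool) → (P → Bool) → T → ℝ,
      (∀ o : P → Option Bool, IsObs Γ Tn o →
        IsRelStrategy Γ (nextConfig Γ c tn Tn o) (σf o)) →
      IsRelStrategy Γ c (fun s => σf (obsOf Γ Tn s) s) ∧
      WDNA Γ c (fun s => σf (obsOf Γ Tn s) s) tn Tn ∧
      ∀ o : P → Option Bool, IsObs Γ Tn o →
        ∀ s : P → Bool, Compatible (nextConfig Γ c tn Tn o).h s →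
          σf (obsOf Γ Tn s) s = σf o s := by
  have hna : NextAction c tn Tn := hwdna.1
  refine ⟨fun s hs => ⟨compatible_nextConfig_obsOf Γ c tn Tn hs, rfl⟩, fun σf hσf => ?_⟩
  have hcompl : ∀ s : P → Bool, Compatible c.h s →
      IsCompletion Γ (nextConfig Γ c tn Tn (obsOf Γ Tn s)) s (σf (obsOf Γ Tn s) s) :=
    fun s hs => hσf _ (isObs_obsOf Γ Tn s) s (compatible_nextConfig_obsOf Γ c tn Tn hs)
  exact ⟨fun s hs => (hcompl s hs).of_nextConfig hna,
    ⟨hna, fun s hs => (hcompl s hs).nextAction_of_nextConfig hwf hna⟩,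
    fun o ho s hs => by rw [obsOf_eq_of_compatible ho hs]⟩
end
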